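/- Let q > 0, H > 0, r > 0 and φ ∈ (π, 2π), and set ρ = (rH/(2q))(1 + cos φ). Consider the quadratic equation L² + L·r√H·sin φ + (rq/2)(1 − cos φ) = 0 in the unknown L ∈ ℝ, whose positive solutions parametrize the angular momenta of repulsive Kepler trajectories through the point r(cos φ, sin φ, 0) with forward asymptotic velocity (√H, 0, 0). Then: (i) if ρ < 1 the equation has no real solutions; (ii) if ρ = 1 it has the unique solution L = −(r√H/2) sin φ, which is positive; (iii) if ρ > 1 it has exactly two solutions, both positive, namely L_± = −sin φ · (r√H/2)(1 ± √(1 − 1/ρ)), and 0 < L₋ < L₊. -/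

import Mathlib

noncomputable section

/-!
Put `m = -sin φ · r√H/2` and `c = (rq/2)(1 - cos φ)`, both positive on `(π, 2π)`. The quadratic is
`L² - 2mL + c = (L - m)² - (m² - c)`, and `1 - cos² φ = sin² φ` gives `c ρ = m²`. Hence the sign
of `m² - c = c (ρ - 1)` decides solvability, and `√(1 - 1/ρ)` is the half-distance between the
roots relative to their midpoint `m`.
-/

theorem sq_sub_two_mul_add_pos {R : Type*} [CommRing R] [LinearOrder R] [IsStrictOrderedRing R]
    {m c : R} (h : m ^ 2 < c) (x : R) : 0 < x ^ 2 - 2 * m * x + c :=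
  calc
    0 < (x - m) ^ 2 + (c - m ^ 2) := add_pos_of_nonneg_of_pos (sq_nonneg _) (sub_pos.2 h)
    _ = x ^ 2 - 2 * m * x + c := by ring

theorem sq_sub_two_mul_add_eq_zero_iff {R : Type*} [CommRing R] [NoZeroDivisors R]
    {m c s : R} (h : m ^ 2 * (1 - s ^ 2) = c) (x : R) :
    x ^ 2 - 2 * m * x + c = 0 ↔ x = m * (1 - s) ∨ x = m * (1 + s) := by
  have factored : x ^ 2 - 2 * m * x + c = (x - m * (1 - s)) * (x - m * (1 + s)) := by
    rw [← h]
    ring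
  rw [factored, mul_eq_zero, sub_eq_zero, sub_eq_zero]

theorem one_sub_sqrt_one_sub_one_div_sq {ρ : ℝ} (hρ : 1 ≤ ρ) : 1 - √(1 - 1 / ρ) ^ 2 = 1 / ρ := by
  have hdiv : 1 / ρ ≤ 1 := (div_le_one (one_pos.trans_le hρ)).2 hρ
  rw [Real.sq_sqrt (sub_nonneg.2 hdiv), sub_sub_cancel]

theorem sqrt_one_sub_one_div_mem_Ioo {ρ : ℝ} (hρ : 1 < ρ) : √(1 - 1 / ρ) ∈ Set.Ioo 0 1 := by
  have hρ₀ : 0 < ρ := one_pos.trans hρ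
  have hpos : 0 < 1 - 1 / ρ := sub_pos.2 ((div_lt_one hρ₀).2 hρ)
  have hlt : 1 - 1 / ρ < 1 := sub_lt_self 1 (one_div_pos.2 hρ₀)
  exact ⟨Real.sqrt_pos.2 hpos, (Real.sqrt_lt_sqrt hpos.le hlt).trans_eq Real.sqrt_one⟩

theorem sin_neg_of_mem_Ioo_pi_two_pi {φ : ℝ} (hφ : φ ∈ Set.Ioo Real.pi (2 * Real.pi)) :
    Real.sin φ < 0 := by
  rw [← Real.sin_sub_two_pi]
  exact Real.sin_neg_of_neg_of_neg_pi_lt (by linarith [hφ.2]) (by linarith [hφ.1])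

theorem cos_lt_one_of_sin_ne_zero {φ : ℝ} (h : Real.sin φ ≠ 0) : Real.cos φ < 1 :=
  (Real.cos_le_one φ).lt_of_ne fun hcos => h (Real.sin_eq_zero_iff_cos_eq.2 (Or.inl hcos))

theorem kepler_constant_mul_rho_eq_midpoint_sq {q H : ℝ} (hq : q ≠ 0) (hH : 0 ≤ H) (r φ : ℝ) :
    r * q / 2 * (1 - Real.cos φ) * (r * H / (2 * q) * (1 + Real.cos φ)) =
      (-Real.sin φ * (r * √H / 2)) ^ 2 :=
  calc
    _ = (1 - Real.cos φ ^ 2) * (r ^ 2 * H / 4) := by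
      field_simp
      ring
    _ = Real.sin φ ^ 2 * (r ^ 2 * √H ^ 2 / 4) := by rw [Real.sin_sq, Real.sq_sqrt hH]
    _ = _ := by ring

/-- The algebraic core of the scattering problem for the repulsive Kepler system: the
quadratic `L² + L·r√H·sin φ + (rq/2)(1 − cos φ) = 0` whose positive roots parametrize the
angular momenta of trajectories through `r(cos φ, sin φ, 0)` (with `φ ∈ (π, 2π)`) with
forward asymptotic velocity `(√H, 0, 0)`.  With `ρ = (rH/(2q))(1 + cos φ)`:
(i) if `ρ < 1` there are no real roots; (ii) if `ρ = 1` there is the unique root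
`L = −(r√H/2)·sin φ > 0`; (iii) if `ρ > 1` there are exactly two roots
`L_± = −sin φ·(r√H/2)(1 ± √(1 − 1/ρ))`, both positive, with `L₋ < L₊`. -/
theorem kepler_scattering_quadratic (q H r φ : ℝ)
    (hq : 0 < q) (hH : 0 < H) (hr : 0 < r)
    (hφ : φ ∈ Set.Ioo Real.pi (2 * Real.pi)) :
    let ρ : ℝ := r * H / (2 * q) * (1 + Real.cos φ)
    let P : ℝ → ℝ := fun L =>
      L ^ 2 + L * (r * Real.sqrt H * Real.sin φ) + r * q / 2 * (1 - Real.cos φ)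
    (ρ < 1 → ∀ L : ℝ, P L ≠ 0) ∧
    (ρ = 1 →
      ((∀ L : ℝ, P L = 0 ↔ L = -(r * Real.sqrt H / 2) * Real.sin φ) ∧
        0 < -(r * Real.sqrt H / 2) * Real.sin φ)) ∧
    (1 < ρ →
      ((∀ L : ℝ, P L = 0 ↔
          L = -Real.sin φ * (r * Real.sqrt H / 2) * (1 - Real.sqrt (1 - 1 / ρ)) ∨
          L = -Real.sin φ * (r * Real.sqrt H / 2) * (1 + Real.sqrt (1 - 1 / ρ))) ∧
        0 < -Real.sin φ * (r * Real.sqrt H / 2) * (1 - Real.sqrt (1 - 1 / ρ)) ∧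
        -Real.sin φ * (r * Real.sqrt H / 2) * (1 - Real.sqrt (1 - 1 / ρ)) <
          -Real.sin φ * (r * Real.sqrt H / 2) * (1 + Real.sqrt (1 - 1 / ρ)))) := by
  intro ρ P
  have hsin : Real.sin φ < 0 := sin_neg_of_mem_Ioo_pi_two_pi hφ
  have hcos : 0 < 1 - Real.cos φ := sub_pos.2 (cos_lt_one_of_sin_ne_zero hsin.ne)
  set m : ℝ := -Real.sin φ * (r * √H / 2)
  set c : ℝ := r * q / 2 * (1 - Real.cos φ)
  have hm₀ : 0 < m := mul_pos (neg_pos.2 hsin) (by positivity)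
  have hc₀ : 0 < c := by positivity
  have hcρ : c * ρ = m ^ 2 := kepler_constant_mul_rho_eq_midpoint_sq hq.ne' hH.le r φ
  have hP (L : ℝ) : P L = L ^ 2 - 2 * m * L + c := by ring
  have hm' : -(r * √H / 2) * Real.sin φ = m := by ring
  simp only [hP, hm']
  refine ⟨fun hρ L => ?_, fun hρ => ⟨fun L => ?_, hm₀⟩, fun hρ => ⟨fun L => ?_, ?_, ?_⟩⟩
  · exact (sq_sub_two_mul_add_pos (hcρ ▸ mul_lt_of_lt_one_right hc₀ hρ) L).ne'
  · have hc : m ^ 2 * (1 - 0 ^ 2) = c := by simp [← hcρ, hρ]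
    simpa using sq_sub_two_mul_add_eq_zero_iff hc L
  · have hc : m ^ 2 * (1 - √(1 - 1 / ρ) ^ 2) = c := by
      rw [one_sub_sqrt_one_sub_one_div_sq hρ.le, ← hcρ, mul_one_div,
        mul_div_cancel_right₀ c (one_pos.trans hρ).ne']
    exact sq_sub_two_mul_add_eq_zero_iff hc L
  · exact mul_pos hm₀ (sub_pos.2 (sqrt_one_sub_one_div_mem_Ioo hρ).2)
  · have hs := (sqrt_one_sub_one_div_mem_Ioo hρ).1
    exact mul_lt_mul_of_pos_left (by linarith) hm₀
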